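/- The level-two series 𝒫̃ can be expressed through 𝒫 and the Eisenstein series E₂: for every τ ∈ ℍ, 𝒫̃(τ) = (3/2)𝒫(τ) − (1/2)E₂(τ). -/

import Mathlib

open Complex

noncomputable section

/-- `q = e^{2πiτ}`. -/
def qq (τ : ℂ) : ℂ := Complex.exp (2 * Real.pi * Complex.I * τ)

/-- Sum of the `k`-th powers of the positive divisors of `n`. -/
def sigma' (k n : ℕ) : ℕ := ∑ d ∈ n.divisors, d ^ k

/-- The Eisenstein series `E₂`. -/
def E2 : ℂ → ℂ := fun τ => 1 - 24 * ∑' n : ℕ, (sigma' 1 (n + 1) : ℂ) * qq τ ^ (n + 1)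

/-- The level-two Eisenstein series `𝒫(τ) = 1 − 8 Σ_{n≥1} (−1)ⁿ n qⁿ/(1−qⁿ)`. -/
def EP : ℂ → ℂ := fun τ =>
  1 - 8 * ∑' n : ℕ, (-1 : ℂ) ^ (n + 1) * ((n : ℂ) + 1) * qq τ ^ (n + 1) / (1 - qq τ ^ (n + 1))

/-- The level-two modular form `𝒫̃(τ) = 1 + 24 Σ_{n≥1} n qⁿ/(1+qⁿ)`. -/
def EPt : ℂ → ℂ := fun τ =>
  1 + 24 * ∑' n : ℕ, ((n : ℂ) + 1) * qq τ ^ (n + 1) / (1 + qq τ ^ (n + 1))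

/-- The Lambert series term. -/
def lam (r : ℂ) (n : ℕ) : ℂ := (n : ℂ) * r ^ n / (1 - r ^ n)

lemma lam_zero (r : ℂ) : lam r 0 = 0 := by simp [lam]

lemma lam_summable {r : ℂ} (hr : ‖r‖ < 1) : Summable (lam r) := by
  have h := summable_norm_pow_mul_geometric_div_one_sub 1 hr
  simp only [pow_one] at h
  exact h

lemma tsum_shift {f : ℕ → ℂ} (hf : Summable f) (h0 : f 0 = 0) :
    ∑' n, f (n + 1) = ∑' n, f n := by
  rw [hf.tsum_eq_zero_add, h0, zero_add]

lemma tsum_sigma_eq {r : ℂ} (hr : ‖r‖ < 1) :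
    ∑' n : ℕ, (sigma' 1 (n + 1) : ℂ) * r ^ (n + 1) = ∑' n, lam r n := by
  have h := tsum_pow_div_one_sub_eq_tsum_sigma hr 1
  rw [tsum_pnat_eq_tsum_succ (f := fun n : ℕ => (n : ℂ) ^ 1 * r ^ n / (1 - r ^ n)),
    tsum_pnat_eq_tsum_succ
      (f := fun n : ℕ => (ArithmeticFunction.sigma 1 n : ℂ) * r ^ n)] at h
  rw [← tsum_shift (lam_summable hr) (lam_zero r)]
  simp only [pow_one] at h
  simp only [lam, h]
  rfl

lemma one_sub_pow_ne {r : ℂ} (hr : ‖r‖ < 1) (n : ℕ) (hn : n ≠ 0) : 1 - r ^ n ≠ 0 := by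
  intro h
  have h1 : r ^ n = 1 := (sub_eq_zero.mp h).symm
  have h2 : ‖r‖ ^ n < 1 := pow_lt_one₀ (norm_nonneg _) hr hn
  rw [← norm_pow, h1] at h2
  simp at h2

set_option maxHeartbeats 2000000 in
lemma main_aux {r : ℂ} (hr : ‖r‖ < 1) :
    2 * ∑' n : ℕ, ((n : ℂ) + 1) * r ^ (n + 1) / (1 + r ^ (n + 1)) =
      ∑' n : ℕ, (sigma' 1 (n + 1) : ℂ) * r ^ (n + 1) -
      ∑' n : ℕ, (-1 : ℂ) ^ (n + 1) * ((n : ℂ) + 1) * r ^ (n + 1) / (1 - r ^ (n + 1)) := by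
  have hs := lam_summable hr
  have he : Summable fun k => lam r (2 * k) :=
    hs.comp_injective (i := fun k : ℕ => 2 * k) (fun a b h => by simpa using h)
  have ho : Summable fun k => lam r (2 * k + 1) :=
    hs.comp_injective (i := fun k : ℕ => 2 * k + 1) (fun a b h => by simpa using h)
  have hS := tsum_even_add_odd he ho
  have he' : Summable fun k : ℕ => (-1 : ℂ) ^ (2 * k) * lam r (2 * k) := by
    simpa [pow_mul] using he
  have ho' : Summable fun k : ℕ => (-1 : ℂ) ^ (2 * k + 1) * lam r (2 * k + 1) := by
    simpa [pow_mul, pow_succ] using ho.neg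
  have hA := tsum_even_add_odd (f := fun n => (-1 : ℂ) ^ n * lam r n) he' ho'
  have hAs : Summable fun n => (-1 : ℂ) ^ n * lam r n :=
    (he'.hasSum.even_add_odd ho'.hasSum).summable
  have h1 : ∑' n : ℕ, (-1 : ℂ) ^ (n + 1) * ((n : ℂ) + 1) * r ^ (n + 1) / (1 - r ^ (n + 1)) =
      ∑' n, (-1 : ℂ) ^ n * lam r n := by
    rw [← tsum_shift hAs (by simp [lam_zero])]
    refine tsum_congr fun n => ?_
    simp only [lam]
    push_cast
    ring
  have h2 : ∑' n : ℕ, ((n : ℂ) + 1) * r ^ (n + 1) / (1 + r ^ (n + 1)) =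
      ∑' n, lam r n - ∑' n, lam r (2 * n) := by
    rw [← hs.tsum_sub he, ← tsum_shift (hs.sub he) (by simp [lam_zero])]
    refine tsum_congr fun n => ?_
    have a := one_sub_pow_ne hr (n + 1) (by omega)
    have b := one_sub_pow_ne hr (2 * (n + 1)) (by omega)
    have e : r ^ (2 * (n + 1)) = (r ^ (n + 1)) ^ 2 := by rw [← pow_mul, mul_comm]
    simp only [lam]
    rw [e] at b ⊢
    push_cast
    generalize r ^ (n + 1) = x at *
    have hf : 1 - x ^ 2 = (1 - x) * (1 + x) := by ring
    rw [hf] at b ⊢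
    have c : 1 + x ≠ 0 := right_ne_zero_of_mul b
    field_simp
    ring
  rw [tsum_sigma_eq hr, h1, h2, ← hA, ← hS]
  simp only [pow_mul, pow_succ, pow_zero, one_mul, mul_neg, mul_one, neg_neg, one_pow, neg_mul,
    tsum_neg]
  ring

/-- `𝒫̃ = (3/2)𝒫 − (1/2)E₂` on the upper half-plane. -/
theorem EPt_eq_EP_E2 :
    ∀ τ : ℂ, 0 < τ.im → EPt τ = (3 / 2) * EP τ - (1 / 2) * E2 τ := by
  intro τ hτ
  have hr : ‖qq τ‖ < 1 := UpperHalfPlane.norm_exp_two_pi_I_lt_one ⟨τ, hτ⟩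
  have h := main_aux hr
  simp only [EPt, EP, E2]
  linear_combination 12 * h
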